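/- Let (i,j) ∈ E be an edge of a finite connected simple graph G. For every β ∈ [0,1], c_OR(i,j) ≥ (1−β)·c_OR-0(i,j) − (|α_i − β| + |α_j − β|). -/

import Mathlib

namespace Curv

open Finset

noncomputable section

variable {V : Type*} [Fintype V] [DecidableEq V] (G : SimpleGraph V) [DecidableRel G.Adj]

/-- `μ` is a probability distribution on the (finite) vertex set. -/
def IsProb (μ : V → ℝ) : Prop := (∀ x, 0 ≤ μ x) ∧ ∑ x, μ x = 1

/-- `π` is a coupling of `μ` and `ν`. -/
def IsCoupling (μ ν : V → ℝ) (π : V → V → ℝ) : Prop :=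
  (∀ x y, 0 ≤ π x y) ∧ (∀ x, ∑ y, π x y = μ x) ∧ (∀ y, ∑ x, π x y = ν y)

/-- Transport cost of a plan `π` with respect to the shortest-path graph distance. -/
def cost (π : V → V → ℝ) : ℝ := ∑ x, ∑ y, (G.dist x y : ℝ) * π x y

/-- Wasserstein-1 distance between two distributions on the vertex set. -/
def W1 (μ ν : V → ℝ) : ℝ := sInf {c : ℝ | ∃ π, IsCoupling μ ν π ∧ cost G π = c}

/-- Dirac mass at `u`. -/
def dirac (u : V) : V → ℝ := fun x => if x = u then 1 else 0

/-- Uniform distribution on the neighbours of `u`. -/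
def unif (u : V) : V → ℝ := fun x => if G.Adj u x then ((G.degree u : ℝ))⁻¹ else 0

/-- Lazy random-walk measure with laziness parameter `α`. -/
def mGen (α : ℝ) (u : V) : V → ℝ := fun x => α * dirac u x + (1 - α) * unif G u x

/-- Canonical laziness `1/(deg u + 1)`. -/
def alphaL (u : V) : ℝ := ((G.degree u : ℝ) + 1)⁻¹

/-- The lazy random-walk measure `m_u`. -/
def mLazy (u : V) : V → ℝ := mGen G (alphaL G u) u

/-- Ollivier–Ricci curvature (lazy). -/
def cOR (i j : V) : ℝ := 1 - W1 G (mLazy G i) (mLazy G j)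

/-- Non-lazy Ollivier–Ricci curvature. -/
def cOR0 (i j : V) : ℝ := 1 - W1 G (unif G i) (unif G j)

/-- Positive part `[x]₊`. -/
def pos (x : ℝ) : ℝ := max x 0

/-- Triangle count `△(u,v)`. -/
def tri (u v : V) : ℕ := (G.neighborFinset u ∩ G.neighborFinset v).card

/-- Unique neighbours `N(u) \ (N(v) ∪ {v})`. -/
def uniq (u v : V) : Finset V := G.neighborFinset u \ insert v (G.neighborFinset v)

/-- `ξ_u(u,v)`: unique neighbours of `u` having a neighbour among unique neighbours of `v`. -/
def xiSet (u v : V) : Finset V := (uniq G u v).filter fun k => ∃ w ∈ uniq G v u, G.Adj k w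

/-- `Ξ_uv`. -/
def Xi (u v : V) : ℕ := (xiSet G u v).card + (xiSet G v u).card

/-- `□̃(k,u,v) = |N(k) ∩ (N(v)\(N(u)∪{u}))|`. -/
def boxT (k u v : V) : ℕ := (G.neighborFinset k ∩ uniq G v u).card

/-- `ϖ_max(u,v)`. -/
def varpi (u v : V) : ℕ :=
  max (((G.neighborFinset u).erase v).sup fun k => boxT G k u v)
      (((G.neighborFinset v).erase u).sup fun w => boxT G w v u)

/-- `þ_max(u,v) = ϖ_max(u,v)·max{ρ_u,ρ_v}`. -/
def thMax (u v : V) : ℕ := varpi G u v * max (G.degree u) (G.degree v)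

/-- Edgewise 4-cycle coefficient `C₄(u,v)`. -/
def C4 (u v : V) : ℝ := if 0 < Xi G u v then (Xi G u v : ℝ) / (thMax G u v : ℝ) else 0

/-- Graph-wide 4-cycle constant `C₄(G)`. -/
def C4Graph : ℝ := sSup {x : ℝ | ∃ u v, G.Adj u v ∧ x = C4 G u v}

def rhoMin (i j : V) : ℕ := min (G.degree i) (G.degree j)

def rhoMax (i j : V) : ℕ := max (G.degree i) (G.degree j)

/-- `𝔖(i,j)`. -/
def frakS (i j : V) : ℝ := 2 / (G.degree i : ℝ) + 2 / (G.degree j : ℝ) - 2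

/-- `𝔗(i,j)`. -/
def frakT (i j : V) : ℝ := 2 / (rhoMax G i j : ℝ) + 1 / (rhoMin G i j : ℝ)

/-- `𝔎(i,j)`. -/
def frakK (i j : V) : ℝ := 1 - 1 / (rhoMin G i j : ℝ) - 1 / (rhoMax G i j : ℝ)

/-- `Z_min(i,j)`. -/
def Zmin (i j : V) : ℝ := (tri G i j : ℝ) / (rhoMin G i j : ℝ)

/-- `Z_max(i,j)`. -/
def Zmax (i j : V) : ℝ := (tri G i j : ℝ) / (rhoMax G i j : ℝ)

/-- Balanced Forman curvature. -/
def cBF (i j : V) : ℝ :=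
  if rhoMin G i j = 1 then 0
  else frakS G i j + frakT G i j * (tri G i j : ℝ) + C4 G i j

/-- `M` is a matching in the cross-edge bipartite graph `B_ij`. -/
def IsCrossMatching (i j : V) (M : Finset (V × V)) : Prop :=
  (∀ p ∈ M, p.1 ∈ uniq G i j ∧ p.2 ∈ uniq G j i ∧ G.Adj p.1 p.2) ∧
  (∀ p ∈ M, ∀ q ∈ M, p ≠ q → p.1 ≠ q.1 ∧ p.2 ≠ q.2)

/-- Maximum matching size `𝔪(i,j)` in the cross-edge bipartite graph. -/
def matchNum (i j : V) : ℕ :=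
  sSup {n : ℕ | ∃ M : Finset (V × V), IsCrossMatching G i j M ∧ M.card = n}

/-- `𝒮(i,j) = 𝔪(i,j)/ρ_max`. -/
def SS (i j : V) : ℝ := (matchNum G i j : ℝ) / (rhoMax G i j : ℝ)

/-- Lazy per-neighbour weight `w_u = (1-α)/ρ_u`. -/
def wA (α : ℝ) (u : V) : ℝ := (1 - α) / (G.degree u : ℝ)

/-- Lazy conductance sum `Σ`. -/
def SigmaA (αi αj : ℝ) (i j : V) : ℝ :=
  (G.degree i : ℝ) / (1 - αi) + (G.degree j : ℝ) / (1 - αj)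

/-- `Const_α`. -/
def ConstA (αi αj : ℝ) (i j : V) : ℝ :=
  -1 + 2 * (min αi ((1 - αj) / (G.degree j : ℝ)) + min αj ((1 - αi) / (G.degree i : ℝ)))
    + (pos (αi - (1 - αj) / (G.degree j : ℝ)) + pos ((1 - αj) / (G.degree j : ℝ) - αi)
      + pos (αj - (1 - αi) / (G.degree i : ℝ)) + pos ((1 - αi) / (G.degree i : ℝ) - αj))
    + ((G.degree i : ℝ) + (G.degree j : ℝ) - 2) / SigmaA G αi αj i j

/-- `Slope_α`. -/
def SlopeA (αi αj : ℝ) (i j : V) : ℝ := wA G αi i + wA G αj j - 2 / SigmaA G αi αj i j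

/-- `α_⋆`: `α_min` when the non-lazy curvature is nonnegative, `α_max` otherwise. -/
def alphaStar (i j : V) : ℝ :=
  if 0 ≤ cOR0 G i j then min (alphaL G i) (alphaL G j) else max (alphaL G i) (alphaL G j)

/-- `Δ_ij(α) = α_max − α_min` for the canonical laziness. -/
def DeltaL (i j : V) : ℝ := max (alphaL G i) (alphaL G j) - min (alphaL G i) (alphaL G j)

/-!
Interpolate through the two measures of common laziness `β`. Since `W₁` satisfies the triangle
inequality, `W₁(m_i, m_j)` is at most the cost of changing the laziness at `i` from `α_i` to `β`,
then moving from `i` to `j` at laziness `β`, then changing the laziness at `j` from `β` to `α_j`.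
By sublinearity of `W₁` the outer two moves cost at most `|α_i - β| W₁(δ_i, ν_i)` and
`|α_j - β| W₁(δ_j, ν_j)`, and the middle one at most `β W₁(δ_i, δ_j) + (1 - β) W₁(ν_i, ν_j)`.
All Wasserstein distances from `δ_i` or `δ_j` occurring here are at most `1`, because the mass
travels along edges.
-/

section Transport

omit [DecidableEq V] [DecidableRel G.Adj]

variable {μ μ' ν ν' ρ : V → ℝ} {π π' : V → V → ℝ}

namespace IsCoupling

theorem symm (h : IsCoupling μ ν π) : IsCoupling ν μ (fun x y => π y x) :=
  ⟨fun x y => h.1 y x, h.2.2, h.2.1⟩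

theorem add (h : IsCoupling μ ν π) (h' : IsCoupling μ' ν' π') :
    IsCoupling (μ + μ') (ν + ν') (π + π') := by
  refine ⟨fun x y => add_nonneg (h.1 x y) (h'.1 x y), fun x => ?_, fun y => ?_⟩
  · simp only [Pi.add_apply, sum_add_distrib, h.2.1, h'.2.1]
  · simp only [Pi.add_apply, sum_add_distrib, h.2.2, h'.2.2]

theorem smul {c : ℝ} (hc : 0 ≤ c) (h : IsCoupling μ ν π) :
    IsCoupling (c • μ) (c • ν) (c • π) := by
  refine ⟨fun x y => mul_nonneg hc (h.1 x y), fun x => ?_, fun y => ?_⟩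
  · simp only [Pi.smul_apply, ← smul_sum, h.2.1]
  · simp only [Pi.smul_apply, ← smul_sum, h.2.2]

theorem diagonal [DecidableEq V] (hμ : 0 ≤ μ) :
    IsCoupling μ μ (fun x y => if x = y then μ x else 0) := by
  refine ⟨fun x y => ?_, fun x => by simp, fun y => by simp⟩
  dsimp only
  split_ifs
  exacts [hμ x, le_rfl]

theorem prod (hμ : IsProb μ) (hν : IsProb ν) : IsCoupling μ ν (fun x y => μ x * ν y) := by
  refine ⟨fun x y => mul_nonneg (hμ.1 x) (hν.1 y), fun x => ?_, fun y => ?_⟩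
  · rw [← mul_sum, hν.2, mul_one]
  · rw [← sum_mul, hμ.2, one_mul]

theorem right_marginal_nonneg (h : IsCoupling μ ν π) (y : V) : 0 ≤ ν y :=
  h.2.2 y ▸ sum_nonneg fun x _ => h.1 x y

theorem eq_zero_of_right_marginal_eq_zero (h : IsCoupling μ ν π) {y : V} (hy : ν y = 0) (x : V) :
    π x y = 0 :=
  (sum_eq_zero_iff_of_nonneg fun x _ => h.1 x y).1 ((h.2.2 y).trans hy) x (mem_univ x)

end IsCoupling

/-- The joint law on triples obtained by gluing a plan `π` with second marginal `ν` to a plan `π'`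
with first marginal `ν`: the middle point has law `ν` and, given it, the two endpoints are
independent. Where `ν y = 0` the division yields `0`, which is the mass wanted there. -/
def glue (ν : V → ℝ) (π π' : V → V → ℝ) (x y z : V) : ℝ := π x y * π' y z / ν y

theorem glue_nonneg (h : IsCoupling μ ν π) (h' : IsCoupling ν ρ π') (x y z : V) :
    0 ≤ glue ν π π' x y z :=
  div_nonneg (mul_nonneg (h.1 x y) (h'.1 y z)) (h.right_marginal_nonneg y)

theorem sum_glue_right (h : IsCoupling μ ν π) (h' : IsCoupling ν ρ π') (x y : V) :
    ∑ z, glue ν π π' x y z = π x y := by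
  simp only [glue, ← sum_div, ← mul_sum, h'.2.1]
  exact mul_div_cancel_of_imp fun hy => h.eq_zero_of_right_marginal_eq_zero hy x

theorem sum_glue_left (h : IsCoupling μ ν π) (h' : IsCoupling ν ρ π') (y z : V) :
    ∑ x, glue ν π π' x y z = π' y z := by
  simp only [glue, ← sum_div, ← sum_mul, h.2.2]
  exact mul_div_cancel_left_of_imp fun hy => h'.symm.eq_zero_of_right_marginal_eq_zero hy z

theorem IsCoupling.trans (h : IsCoupling μ ν π) (h' : IsCoupling ν ρ π') :
    IsCoupling μ ρ (fun x z => ∑ y, glue ν π π' x y z) := by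
  refine ⟨fun x z => sum_nonneg fun y _ => glue_nonneg h h' x y z, fun x => ?_, fun z => ?_⟩
  · rw [sum_comm]
    simp only [sum_glue_right h h', h.2.1]
  · rw [sum_comm]
    simp only [sum_glue_left h h', h'.2.2]

theorem cost_add (π π' : V → V → ℝ) : cost G (π + π') = cost G π + cost G π' := by
  simp only [cost, Pi.add_apply, mul_add, sum_add_distrib]

theorem cost_smul (c : ℝ) (π : V → V → ℝ) : cost G (c • π) = c * cost G π := by
  simp only [cost, Pi.smul_apply, smul_eq_mul, mul_left_comm _ c, mul_sum]

theorem cost_swap (π : V → V → ℝ) : cost G (fun x y => π y x) = cost G π := by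
  unfold cost
  rw [sum_comm]
  simp only [SimpleGraph.dist_comm]

theorem cost_nonneg (hπ : ∀ x y, 0 ≤ π x y) : 0 ≤ cost G π :=
  sum_nonneg fun x _ => sum_nonneg fun y _ => mul_nonneg (Nat.cast_nonneg _) (hπ x y)

variable {G}

theorem cost_glue_le (hG : G.Connected) (h : IsCoupling μ ν π) (h' : IsCoupling ν ρ π') :
    cost G (fun x z => ∑ y, glue ν π π' x y z) ≤ cost G π + cost G π' := by
  have dist_triangle (x y z : V) : (G.dist x z : ℝ) ≤ G.dist x y + G.dist y z :=
    mod_cast hG.dist_triangle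
  calc
    cost G (fun x z => ∑ y, glue ν π π' x y z)
        = ∑ x, ∑ y, ∑ z, (G.dist x z : ℝ) * glue ν π π' x y z := by
        simp only [cost, mul_sum]
        exact sum_congr rfl fun _ _ => sum_comm
    _ ≤ ∑ x, ∑ y, ∑ z, ((G.dist x y : ℝ) + G.dist y z) * glue ν π π' x y z := by
        gcongr with x _ y _ z _
        exacts [glue_nonneg h h' x y z, dist_triangle x y z]
    _ = ∑ x, ∑ y, (G.dist x y : ℝ) * ∑ z, glue ν π π' x y z
          + ∑ y, ∑ z, (G.dist y z : ℝ) * ∑ x, glue ν π π' x y z := by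
        simp only [add_mul, sum_add_distrib, mul_sum]
        congr 1
        rw [sum_comm]
        exact sum_congr rfl fun _ _ => sum_comm
    _ = cost G π + cost G π' := by simp only [sum_glue_right h h', sum_glue_left h h', cost]

theorem W1_le_cost (h : IsCoupling μ ν π) : W1 G μ ν ≤ cost G π := by
  refine csInf_le ⟨0, ?_⟩ ⟨π, h, rfl⟩
  rintro _ ⟨_, hcoupling, rfl⟩
  exact cost_nonneg G hcoupling.1

/-- Without a coupling `W1` is the infimum of the empty set, which is `0`. -/
theorem le_W1 (hμν : ∃ π, IsCoupling μ ν π) {c : ℝ}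
    (hc : ∀ π, IsCoupling μ ν π → c ≤ cost G π) : c ≤ W1 G μ ν := by
  obtain ⟨π, hπ⟩ := hμν
  refine le_csInf ⟨_, π, hπ, rfl⟩ ?_
  rintro _ ⟨π', h', rfl⟩
  exact hc π' h'

theorem le_W1_add_W1 (hμν : ∃ π, IsCoupling μ ν π) (hμν' : ∃ π, IsCoupling μ' ν' π) {c : ℝ}
    (hc : ∀ π π', IsCoupling μ ν π → IsCoupling μ' ν' π' → c ≤ cost G π + cost G π') :
    c ≤ W1 G μ ν + W1 G μ' ν' := by
  rw [← sub_le_iff_le_add']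
  refine le_W1 hμν' fun π' h' => ?_
  rw [sub_le_comm]
  exact le_W1 hμν fun π h => sub_le_iff_le_add.2 (hc π π' h h')

variable (G) in
theorem W1_comm (μ ν : V → ℝ) : W1 G μ ν = W1 G ν μ := by
  have swap {μ ν : V → ℝ} {c : ℝ} :
      (∃ π, IsCoupling μ ν π ∧ cost G π = c) → ∃ π, IsCoupling ν μ π ∧ cost G π = c := by
    rintro ⟨π, h, hc⟩
    exact ⟨_, h.symm, (cost_swap G π).trans hc⟩
  exact congrArg sInf (Set.ext fun _ => ⟨swap, swap⟩)

theorem W1_self_nonpos (hμ : 0 ≤ μ) : W1 G μ μ ≤ 0 := by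
  classical
  exact (W1_le_cost (.diagonal hμ)).trans_eq (by simp [cost])

theorem W1_triangle (hG : G.Connected) (hμν : ∃ π, IsCoupling μ ν π)
    (hνρ : ∃ π, IsCoupling ν ρ π) : W1 G μ ρ ≤ W1 G μ ν + W1 G ν ρ :=
  le_W1_add_W1 hμν hνρ fun _ _ h h' => (W1_le_cost (h.trans h')).trans (cost_glue_le hG h h')

theorem W1_add_le (hμν : ∃ π, IsCoupling μ ν π) (hμν' : ∃ π, IsCoupling μ' ν' π) :
    W1 G (μ + μ') (ν + ν') ≤ W1 G μ ν + W1 G μ' ν' :=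
  le_W1_add_W1 hμν hμν' fun π π' h h' => (W1_le_cost (h.add h')).trans_eq (cost_add G π π')

theorem W1_smul_le {c : ℝ} (hc : 0 ≤ c) (hμν : ∃ π, IsCoupling μ ν π) :
    W1 G (c • μ) (c • ν) ≤ c * W1 G μ ν := by
  have le_mul_cost (π) (h : IsCoupling μ ν π) : W1 G (c • μ) (c • ν) ≤ c * cost G π :=
    (W1_le_cost (h.smul hc)).trans_eq (cost_smul G c π)
  rcases hc.eq_or_lt with rfl | hc
  · obtain ⟨π, h⟩ := hμν
    simpa using le_mul_cost π h
  · rw [← div_le_iff₀' hc]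
    exact le_W1 hμν fun π h => (div_le_iff₀' hc).2 (le_mul_cost π h)

end Transport

section ConvexCombination

omit [DecidableEq V] [DecidableRel G.Adj]

variable {G} {μ μ' ν ν' : V → ℝ} {a b : ℝ}

theorem IsProb.exists_isCoupling (hμ : IsProb μ) (hν : IsProb ν) : ∃ π, IsCoupling μ ν π :=
  ⟨_, .prod hμ hν⟩

theorem IsProb.convexComb (hμ : IsProb μ) (hν : IsProb ν) (ha : a ∈ Set.Icc (0 : ℝ) 1) :
    IsProb (a • μ + (1 - a) • ν) := by
  refine ⟨fun x => add_nonneg (mul_nonneg ha.1 (hμ.1 x))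
    (mul_nonneg (sub_nonneg.2 ha.2) (hν.1 x)), ?_⟩
  simp [sum_add_distrib, ← mul_sum, hμ.2, hν.2]

theorem W1_convexComb_same_weight_le (hμ : IsProb μ) (hμ' : IsProb μ') (hν : IsProb ν)
    (hν' : IsProb ν') (ha : a ∈ Set.Icc (0 : ℝ) 1) :
    W1 G (a • μ + (1 - a) • ν) (a • μ' + (1 - a) • ν')
      ≤ a * W1 G μ μ' + (1 - a) * W1 G ν ν' := by
  have ha' : 0 ≤ 1 - a := sub_nonneg.2 ha.2
  obtain ⟨π, h⟩ := hμ.exists_isCoupling hμ'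
  obtain ⟨π', h'⟩ := hν.exists_isCoupling hν'
  exact (W1_add_le ⟨_, h.smul ha.1⟩ ⟨_, h'.smul ha'⟩).trans
    (add_le_add (W1_smul_le ha.1 ⟨π, h⟩) (W1_smul_le ha' ⟨π', h'⟩))

theorem W1_convexComb_same_measures_le (hμ : IsProb μ) (hν : IsProb ν) (ha : a ∈ Set.Icc (0 : ℝ) 1)
    (hb : b ∈ Set.Icc (0 : ℝ) 1) :
    W1 G (a • μ + (1 - a) • ν) (b • μ + (1 - b) • ν) ≤ |a - b| * W1 G μ ν := by
  wlog hba : b ≤ a generalizing a b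
  · rw [W1_comm, abs_sub_comm]
    exact this hb ha (le_of_not_ge hba)
  have hab : 0 ≤ a - b := sub_nonneg.2 hba
  -- The common part `κ` of the two measures stays put.
  set κ := b • μ + (1 - a) • ν with hκ
  have hκ_nonneg : 0 ≤ κ :=
    add_nonneg (smul_nonneg hb.1 hμ.1) (smul_nonneg (sub_nonneg.2 ha.2) hν.1)
  obtain ⟨π, h⟩ := hμ.exists_isCoupling hν
  classical
  calc
    W1 G (a • μ + (1 - a) • ν) (b • μ + (1 - b) • ν)
        = W1 G (κ + (a - b) • μ) (κ + (a - b) • ν) := by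
          congr 1 <;> rw [hκ] <;> module
    _ ≤ W1 G κ κ + W1 G ((a - b) • μ) ((a - b) • ν) :=
          W1_add_le ⟨_, .diagonal hκ_nonneg⟩ ⟨_, h.smul hab⟩
    _ ≤ 0 + (a - b) * W1 G μ ν :=
          add_le_add (W1_self_nonpos hκ_nonneg) (W1_smul_le hab ⟨π, h⟩)
    _ = |a - b| * W1 G μ ν := by rw [zero_add, abs_of_nonneg hab]

theorem W1_convexComb_le (hG : G.Connected) (hμ : IsProb μ) (hμ' : IsProb μ') (hν : IsProb ν)
    (hν' : IsProb ν') (ha : a ∈ Set.Icc (0 : ℝ) 1) (hb : b ∈ Set.Icc (0 : ℝ) 1) {β : ℝ}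
    (hβ : β ∈ Set.Icc (0 : ℝ) 1) :
    W1 G (a • μ + (1 - a) • ν) (b • μ' + (1 - b) • ν')
      ≤ |a - β| * W1 G μ ν + (β * W1 G μ μ' + (1 - β) * W1 G ν ν') + |b - β| * W1 G μ' ν' := by
  have hβ_left : IsProb (β • μ + (1 - β) • ν) := hμ.convexComb hν hβ
  have hβ_right : IsProb (β • μ' + (1 - β) • ν') := hμ'.convexComb hν' hβ
  have hb_right : IsProb (b • μ' + (1 - b) • ν') := hμ'.convexComb hν' hb
  calc
    W1 G (a • μ + (1 - a) • ν) (b • μ' + (1 - b) • ν')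
        ≤ W1 G (a • μ + (1 - a) • ν) (β • μ + (1 - β) • ν)
          + W1 G (β • μ + (1 - β) • ν) (b • μ' + (1 - b) • ν') :=
      W1_triangle hG ((hμ.convexComb hν ha).exists_isCoupling hβ_left)
        (hβ_left.exists_isCoupling hb_right)
    _ ≤ W1 G (a • μ + (1 - a) • ν) (β • μ + (1 - β) • ν)
          + (W1 G (β • μ + (1 - β) • ν) (β • μ' + (1 - β) • ν')
            + W1 G (β • μ' + (1 - β) • ν') (b • μ' + (1 - b) • ν')) := by
      gcongr
      exact W1_triangle hG (hβ_left.exists_isCoupling hβ_right)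
        (hβ_right.exists_isCoupling hb_right)
    _ ≤ |a - β| * W1 G μ ν
          + ((β * W1 G μ μ' + (1 - β) * W1 G ν ν') + |b - β| * W1 G μ' ν') := by
      rw [abs_sub_comm b β]
      gcongr
      exacts [W1_convexComb_same_measures_le hμ hν ha hβ,
        W1_convexComb_same_weight_le hμ hμ' hν hν' hβ,
        W1_convexComb_same_measures_le hμ' hν' hβ hb]
    _ = _ := (add_assoc _ _ _).symm

end ConvexCombination

section Dirac

omit [DecidableRel G.Adj]

theorem isProb_dirac (u : V) : IsProb (dirac u) := by
  refine ⟨fun x => ?_, by simp [dirac]⟩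
  unfold dirac
  split_ifs <;> norm_num

variable {G} {u : V} {ν : V → ℝ}

theorem W1_dirac_le (hν : IsProb ν) {r : ℝ} (hr : ∀ x, ν x ≠ 0 → G.dist u x ≤ r) :
    W1 G (dirac u) ν ≤ r := by
  calc
    W1 G (dirac u) ν ≤ cost G (fun x y => dirac u x * ν y) :=
      W1_le_cost (.prod (isProb_dirac u) hν)
    _ = ∑ y, (G.dist u y : ℝ) * ν y := by
      simp [cost, dirac]
    _ ≤ ∑ y, r * ν y := by
      refine sum_le_sum fun y _ => ?_
      rcases eq_or_ne (ν y) 0 with hy | hy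
      · simp [hy]
      · exact mul_le_mul_of_nonneg_right (hr y hy) (hν.1 y)
    _ = r := by rw [← mul_sum, hν.2, mul_one]

theorem W1_dirac_le_one (hν : IsProb ν) (hsupp : ∀ x, ¬ G.Adj u x → ν x = 0) :
    W1 G (dirac u) ν ≤ 1 := by
  refine W1_dirac_le hν fun x hx => ?_
  have hux : G.Adj u x := not_imp_comm.1 (hsupp x) hx
  simp [SimpleGraph.dist_eq_one_iff_adj.2 hux]

theorem W1_dirac_dirac_le_one {v : V} (huv : G.Adj u v) : W1 G (dirac u) (dirac v) ≤ 1 :=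
  W1_dirac_le_one (isProb_dirac v) fun _ hux => if_neg (by rintro rfl; exact hux huv)

end Dirac

/-- the master lazy-to-non-lazy transfer inequality, for every `β ∈ [0,1]`. -/
theorem stmt3 (hG : G.Connected) (i j : V) (hij : G.Adj i j)
    (αi αj : ℝ) (hαi : αi ∈ Set.Icc (0:ℝ) 1) (hαj : αj ∈ Set.Icc (0:ℝ) 1)
    (νi νj : V → ℝ) (hνi : IsProb νi) (hνj : IsProb νj)
    (hsi : ∀ x, ¬ G.Adj i x → νi x = 0) (hsj : ∀ x, ¬ G.Adj j x → νj x = 0)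
    (β : ℝ) (hβ : β ∈ Set.Icc (0:ℝ) 1) :
    1 - W1 G (fun x => αi * dirac i x + (1 - αi) * νi x)
          (fun x => αj * dirac j x + (1 - αj) * νj x)
      ≥ (1 - β) * (1 - W1 G νi νj) - (|αi - β| + |αj - β|) := by
  have transfer : W1 G (fun x => αi * dirac i x + (1 - αi) * νi x)
      (fun x => αj * dirac j x + (1 - αj) * νj x) ≤
        |αi - β| * W1 G (dirac i) νi + (β * W1 G (dirac i) (dirac j) + (1 - β) * W1 G νi νj)
          + |αj - β| * W1 G (dirac j) νj :=
    W1_convexComb_le hG (isProb_dirac i) (isProb_dirac j) hνi hνj hαi hαj hβ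
  have cost_at_i : |αi - β| * W1 G (dirac i) νi ≤ |αi - β| :=
    mul_le_of_le_one_right (abs_nonneg _) (W1_dirac_le_one hνi hsi)
  have cost_at_j : |αj - β| * W1 G (dirac j) νj ≤ |αj - β| :=
    mul_le_of_le_one_right (abs_nonneg _) (W1_dirac_le_one hνj hsj)
  have cost_along_edge : β * W1 G (dirac i) (dirac j) ≤ β :=
    mul_le_of_le_one_right hβ.1 (W1_dirac_dirac_le_one hij)
  linarith

end

end Curv
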